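/- Let k be a rational number and let ω ∈ ℂ be a root of P_k = X³ − kX² + (k−3)X + 1 with ω ≠ 0 and ω ≠ 1. Then (ω−1)/ω and −1/(ω−1) are also roots of P_k. -/

import Mathlib

/-!
The Möbius map `φ x = (x - 1) / x` satisfies `φ (φ x) = -1 / (x - 1)` and preserves the roots of
the simplest cubic `P`, because `P (φ x) = -P x / x ^ 3` and no root is zero. The two claims are
the first and the second iterate of this invariance.
-/

section SimplestCubic

open Polynomial

/-- Shanks' simplest cubic polynomial `X³ - kX² + (k - 3)X + 1`, over any commutative ring so that
the parameter `k` need not be rational. -/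
noncomputable def simplestCubic {R : Type*} [CommRing R] (k : R) : R[X] :=
  X ^ 3 - C k * X ^ 2 + C (k - 3) * X + 1

section CommRing

variable {R : Type*} [CommRing R]

theorem eval_simplestCubic (k x : R) :
    (simplestCubic k).eval x = x ^ 3 - k * x ^ 2 + (k - 3) * x + 1 := by
  simp [simplestCubic]

theorem isRoot_simplestCubic_iff {k x : R} :
    (simplestCubic k).IsRoot x ↔ x ^ 3 - k * x ^ 2 + (k - 3) * x + 1 = 0 := by
  rw [IsRoot.def, eval_simplestCubic]

theorem ne_zero_of_isRoot_simplestCubic [Nontrivial R] {k x : R}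
    (hx : (simplestCubic k).IsRoot x) : x ≠ 0 := by
  rintro rfl
  simp [eval_simplestCubic] at hx

end CommRing

theorem sub_one_div_self_sub_one_div_self {K : Type*} [DivisionRing K] {x : K} (hx : x ≠ 0) :
    ((x - 1) / x - 1) / ((x - 1) / x) = -1 / (x - 1) := by
  have sub_one_eq : (x - 1) / x - 1 = -1 / x := by
    rw [div_sub_one hx, sub_sub_cancel_left]
  rw [sub_one_eq, div_div_div_cancel_right₀ hx]

section Field

variable {F : Type*} [Field F] {k x : F}

theorem eval_simplestCubic_sub_one_div_self (k : F) (hx : x ≠ 0) :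
    (simplestCubic k).eval ((x - 1) / x) = -(simplestCubic k).eval x / x ^ 3 := by
  simp only [eval_simplestCubic]
  field_simp
  ring

theorem isRoot_simplestCubic_sub_one_div_self (hx : (simplestCubic k).IsRoot x) :
    (simplestCubic k).IsRoot ((x - 1) / x) := by
  rw [IsRoot.def, eval_simplestCubic_sub_one_div_self k (ne_zero_of_isRoot_simplestCubic hx),
    hx.eq_zero, neg_zero, zero_div]

theorem stmt8_general (hx : (simplestCubic k).IsRoot x) :
    (simplestCubic k).IsRoot ((x - 1) / x) ∧ (simplestCubic k).IsRoot (-1 / (x - 1)) := by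
  have hφ := isRoot_simplestCubic_sub_one_div_self hx
  have hφφ := isRoot_simplestCubic_sub_one_div_self hφ
  rw [sub_one_div_self_sub_one_div_self (ne_zero_of_isRoot_simplestCubic hx)] at hφφ
  exact ⟨hφ, hφφ⟩

end Field

end SimplestCubic

theorem stmt8 (k : ℚ) (ω : ℂ)
    (hω : ω ^ 3 - (k : ℂ) * ω ^ 2 + ((k : ℂ) - 3) * ω + 1 = 0)
    (h0 : ω ≠ 0) (h1 : ω ≠ 1) :
    ((ω - 1) / ω) ^ 3 - (k : ℂ) * ((ω - 1) / ω) ^ 2 + ((k : ℂ) - 3) * ((ω - 1) / ω) + 1 = 0 ∧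
    (-1 / (ω - 1)) ^ 3 - (k : ℂ) * (-1 / (ω - 1)) ^ 2 + ((k : ℂ) - 3) * (-1 / (ω - 1)) + 1 = 0 := by
  simpa only [isRoot_simplestCubic_iff] using stmt8_general (isRoot_simplestCubic_iff.mpr hω)
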